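/- Let p ≥ 1 and let Φ : 𝒲_p(Q) → 𝒲_p(Q) be an isometry, where Q = [−1,1]² with the maximum metric. If μ, ν ∈ 𝒲_p(Q) have their supports contained in two opposite sides of Q, then the supports of Φ(μ) and Φ(ν) are also contained in two opposite sides of Q. -/

import Mathlib

open MeasureTheory

/-- The `p`-Wasserstein distance between two measures, defined as the infimum over all
couplings `π` of `μ` and `ν` of `(∬ d(x,y)^p dπ)^(1/p)`. -/
noncomputable def Wdist {X : Type*} [MeasurableSpace X] [PseudoMetricSpace X] (p : ℝ)
    (μ ν : Measure X) : ℝ :=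
  (⨅ π ∈ {π : Measure (X × X) | π.map Prod.fst = μ ∧ π.map Prod.snd = ν},
    (∫⁻ q, edist q.1 q.2 ^ p ∂π) ^ (1 / p)).toReal

/-- The `p`-Wasserstein space over `X`: Borel probability measures on `X` with finite
`p`-th moment. -/
def WSet (X : Type*) [MeasurableSpace X] [PseudoMetricSpace X] (p : ℝ) : Set (Measure X) :=
  {μ | IsProbabilityMeasure μ ∧ ∃ x₀ : X, ∫⁻ x, edist x x₀ ^ p ∂μ < ⊤}

/-- An isometry of the underlying metric space: a distance-preserving bijection. -/
def IsIsom {X : Type*} [PseudoMetricSpace X] (T : X → X) : Prop :=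
  Function.Bijective T ∧ ∀ x y, dist (T x) (T y) = dist x y

/-- An isometry of the `p`-Wasserstein space over `X`: a bijection of the space of
probability measures with finite `p`-th moment preserving the Wasserstein distance. -/
def IsWIsometry (X : Type*) [MeasurableSpace X] [PseudoMetricSpace X] (p : ℝ)
    (Φ : Measure X → Measure X) : Prop :=
  Set.BijOn Φ (WSet X p) (WSet X p) ∧
    ∀ μ ∈ WSet X p, ∀ ν ∈ WSet X p, Wdist p (Φ μ) (Φ ν) = Wdist p μ ν

/-- The (topological) support of a measure. -/
def msupport {X : Type*} [TopologicalSpace X] [MeasurableSpace X] (μ : Measure X) : Set X :=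
  {x | ∀ U : Set X, IsOpen U → x ∈ U → μ U ≠ 0}

def diagLine (ε a : ℝ) : Set (ℝ × ℝ) := {z | z.2 = ε * z.1 + a}

def Lplus : Set (ℝ × ℝ) := {z | z.2 = z.1}

def Lminus : Set (ℝ × ℝ) := {z | z.2 = -z.1}

/-- The closed square `Q = [-1,1]²`. -/
abbrev Qs : Set (ℝ × ℝ) := Set.Icc (-1, -1) (1, 1)

def LplusQ : Set ↥Qs := {q | (q : ℝ × ℝ).2 = (q : ℝ × ℝ).1}

def LminusQ : Set ↥Qs := {q | (q : ℝ × ℝ).2 = -(q : ℝ × ℝ).1}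


/-- The left, right, bottom, and top sides of `Q = [-1,1]²`. -/
def sideL : Set ↥Qs := {q | (q : ℝ × ℝ).1 = -1}
def sideR : Set ↥Qs := {q | (q : ℝ × ℝ).1 = 1}
def sideB : Set ↥Qs := {q | (q : ℝ × ℝ).2 = -1}
def sideT : Set ↥Qs := {q | (q : ℝ × ℝ).2 = 1}

/-- `A` and `B` are contained in two opposite sides of `Q`. -/
def OppSides (A B : Set ↥Qs) : Prop :=
  (A ⊆ sideL ∧ B ⊆ sideR) ∨ (A ⊆ sideR ∧ B ⊆ sideL) ∨
  (A ⊆ sideB ∧ B ⊆ sideT) ∨ (A ⊆ sideT ∧ B ⊆ sideB)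

section Helpers

lemma qs_dist_eq (x y : ↥Qs) : dist x y =
    max |(x : ℝ × ℝ).1 - (y : ℝ × ℝ).1| |(x : ℝ × ℝ).2 - (y : ℝ × ℝ).2| := by
  rw [Subtype.dist_eq, Prod.dist_eq, Real.dist_eq, Real.dist_eq]

lemma qs_bounds (x : ↥Qs) : -1 ≤ (x : ℝ × ℝ).1 ∧ (x : ℝ × ℝ).1 ≤ 1 ∧
    -1 ≤ (x : ℝ × ℝ).2 ∧ (x : ℝ × ℝ).2 ≤ 1 := by
  obtain ⟨⟨a, b⟩, h1, h2⟩ := x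
  exact ⟨h1.1, h2.1, h1.2, h2.2⟩

lemma qs_dist_le (x y : ↥Qs) : dist x y ≤ 2 := by
  have hx := qs_bounds x
  have hy := qs_bounds y
  rw [qs_dist_eq]
  apply max_le <;> rw [abs_le] <;> constructor <;> linarith

lemma qs_edist_le (x y : ↥Qs) : edist x y ≤ 2 := by
  rw [edist_dist]
  calc ENNReal.ofReal (dist x y) ≤ ENNReal.ofReal 2 := ENNReal.ofReal_le_ofReal (qs_dist_le x y)
    _ = 2 := by simp

lemma qs_dist_two {x y : ↥Qs} (h : dist x y = 2) :
    (x ∈ sideL ∧ y ∈ sideR) ∨ (x ∈ sideR ∧ y ∈ sideL) ∨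
    (x ∈ sideB ∧ y ∈ sideT) ∨ (x ∈ sideT ∧ y ∈ sideB) := by
  have hx := qs_bounds x
  have hy := qs_bounds y
  rw [qs_dist_eq] at h
  simp only [sideL, sideR, sideB, sideT, Set.mem_ofPred_eq]
  rcases max_choice |(x : ℝ × ℝ).1 - (y : ℝ × ℝ).1| |(x : ℝ × ℝ).2 - (y : ℝ × ℝ).2| with h' | h'
  · rw [h'] at h
    rcases abs_cases ((x : ℝ × ℝ).1 - (y : ℝ × ℝ).1) with h2 | h2
    · right; left; constructor <;> linarith
    · left; constructor <;> linarith
  · rw [h'] at h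
    rcases abs_cases ((x : ℝ × ℝ).2 - (y : ℝ × ℝ).2) with h2 | h2
    · right; right; right; constructor <;> linarith
    · right; right; left; constructor <;> linarith

lemma dist_two_of_side {x y : ↥Qs} (h : (x ∈ sideL ∧ y ∈ sideR) ∨ (x ∈ sideR ∧ y ∈ sideL) ∨
    (x ∈ sideB ∧ y ∈ sideT) ∨ (x ∈ sideT ∧ y ∈ sideB)) : dist x y = 2 := by
  apply le_antisymm (qs_dist_le x y)
  rw [qs_dist_eq]
  simp only [sideL, sideR, sideB, sideT, Set.mem_ofPred_eq] at h
  rcases h with ⟨h1, h2⟩ | ⟨h1, h2⟩ | ⟨h1, h2⟩ | ⟨h1, h2⟩ <;> rw [h1, h2] <;> norm_num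

lemma mem_WSet {p : ℝ} (hp : 1 ≤ p) (μ : Measure ↥Qs) (h : IsProbabilityMeasure μ) :
    μ ∈ WSet ↥Qs p := by
  refine ⟨h, ⟨(0, 0), by simp [Prod.le_def]⟩, ?_⟩
  calc _ ≤ ∫⁻ x : ↥Qs, (2 : ENNReal) ^ p ∂μ :=
        lintegral_mono fun x => ENNReal.rpow_le_rpow (qs_edist_le _ _) (by linarith)
    _ < ⊤ := by
        simp only [lintegral_const, measure_univ, mul_one]
        exact ENNReal.rpow_lt_top_of_nonneg (by linarith) (by simp)

lemma fst_ae {X : Type*} [MeasurableSpace X] {μ : Measure X} {π : Measure (X × X)}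
    (h : π.map Prod.fst = μ) {A : Set X} (hA : μ Aᶜ = 0) : ∀ᵐ q ∂π, q.1 ∈ A := by
  have : ∀ᵐ x ∂(π.map Prod.fst), x ∈ A := by rw [h]; exact hA
  exact ae_of_ae_map measurable_fst.aemeasurable this

lemma snd_ae {X : Type*} [MeasurableSpace X] {μ : Measure X} {π : Measure (X × X)}
    (h : π.map Prod.snd = μ) {A : Set X} (hA : μ Aᶜ = 0) : ∀ᵐ q ∂π, q.2 ∈ A := by
  have : ∀ᵐ x ∂(π.map Prod.snd), x ∈ A := by rw [h]; exact hA
  exact ae_of_ae_map measurable_snd.aemeasurable this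

lemma mass_one {X : Type*} [MeasurableSpace X] {μ : Measure X} [IsProbabilityMeasure μ]
    {π : Measure (X × X)} (h : π.map Prod.fst = μ) : π Set.univ = 1 := by
  have : (π.map Prod.fst) Set.univ = 1 := by rw [h]; simp
  rwa [Measure.map_apply measurable_fst MeasurableSet.univ] at this

lemma prod_coupling {X : Type*} [MeasurableSpace X] (μ ν : Measure X) [IsProbabilityMeasure μ]
    [IsProbabilityMeasure ν] : (μ.prod ν).map Prod.fst = μ ∧ (μ.prod ν).map Prod.snd = ν := by
  simp

lemma Wdist_const {X : Type*} [MeasurableSpace X] [PseudoMetricSpace X]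
    {p : ℝ} (hp : 1 ≤ p) {μ ν : Measure X} (hμ : IsProbabilityMeasure μ)
    (hν : IsProbabilityMeasure ν) {A B : Set X} (hA : μ Aᶜ = 0) (hB : ν Bᶜ = 0)
    {r : ℝ} (hr : 0 ≤ r) (hAB : ∀ a ∈ A, ∀ b ∈ B, dist a b = r) : Wdist p μ ν = r := by
  have key : ∀ π ∈ {π : Measure (X × X) | π.map Prod.fst = μ ∧ π.map Prod.snd = ν},
      (∫⁻ q, edist q.1 q.2 ^ p ∂π) ^ (1 / p) = ENNReal.ofReal r := by
    rintro π ⟨h1, h2⟩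
    have : ∫⁻ q, edist q.1 q.2 ^ p ∂π = ∫⁻ q, (ENNReal.ofReal r) ^ p ∂π := by
      apply lintegral_congr_ae
      filter_upwards [fst_ae h1 hA, snd_ae h2 hB] with q ha hb
      rw [edist_dist, hAB _ ha _ hb]
    rw [this, lintegral_const, mass_one h1, mul_one, ← ENNReal.rpow_mul,
      mul_one_div_cancel (by linarith), ENNReal.rpow_one]
  unfold Wdist
  have : (⨅ π ∈ {π : Measure (X × X) | π.map Prod.fst = μ ∧ π.map Prod.snd = ν},
    (∫⁻ q, edist q.1 q.2 ^ p ∂π) ^ (1 / p)) = ENNReal.ofReal r := by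
    apply le_antisymm
    · exact (iInf₂_le (μ.prod ν) (prod_coupling μ ν)).trans (key _ (prod_coupling μ ν)).le
    · exact le_iInf₂ fun π hπ => (key π hπ).ge
  rw [this, ENNReal.toReal_ofReal hr]

lemma dist_of_Wdist_two {p : ℝ} (hp : 1 ≤ p) {μ ν : Measure ↥Qs} (hμ : IsProbabilityMeasure μ)
    (hν : IsProbabilityMeasure ν) (h : Wdist p μ ν = 2) :
    ∀ x ∈ msupport μ, ∀ y ∈ msupport ν, dist x y = 2 := by
  intro x hx y hy
  have hp0 : 0 < p := by linarith
  set I := ∫⁻ q : ↥Qs × ↥Qs, edist q.1 q.2 ^ p ∂(μ.prod ν) with hI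
  have hIle : I ≤ 2 ^ p := by
    calc I ≤ ∫⁻ q : ↥Qs × ↥Qs, (2 : ENNReal) ^ p ∂(μ.prod ν) :=
        lintegral_mono fun x => ENNReal.rpow_le_rpow (qs_edist_le _ _) hp0.le
    _ = 2 ^ p := by simp
  have hItop : I ≠ ⊤ :=
    (hIle.trans_lt (ENNReal.rpow_lt_top_of_nonneg hp0.le (by simp))).ne
  have h2 : (2 : ENNReal) ≤ I ^ (1 / p) := by
    have hle : (⨅ π ∈ {π : Measure (↥Qs × ↥Qs) | π.map Prod.fst = μ ∧ π.map Prod.snd = ν},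
      (∫⁻ q, edist q.1 q.2 ^ p ∂π) ^ (1 / p)) ≤ I ^ (1 / p) :=
        iInf₂_le (μ.prod ν) (prod_coupling μ ν)
    have h3 := ENNReal.toReal_mono (ENNReal.rpow_ne_top_of_nonneg (by positivity) hItop) hle
    change Wdist p μ ν ≤ _ at h3
    rw [h] at h3
    have := ENNReal.ofReal_le_of_le_toReal h3
    simpa using this
  have h2' : (2 : ENNReal) ^ p ≤ I := by
    have := ENNReal.rpow_le_rpow h2 hp0.le
    rwa [← ENNReal.rpow_mul, one_div_mul_cancel hp0.ne', ENNReal.rpow_one] at this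
  have hae : ∀ᵐ q ∂(μ.prod ν), edist q.1 q.2 ^ p = (2 : ENNReal) ^ p := by
    apply ae_eq_of_ae_le_of_lintegral_le
    · exact Filter.Eventually.of_forall fun q => ENNReal.rpow_le_rpow (qs_edist_le _ _) hp0.le
    · exact hItop
    · exact aemeasurable_const
    · simpa using h2'
  have hae2 : ∀ᵐ q ∂(μ.prod ν), ¬ dist q.1 q.2 < 2 := by
    filter_upwards [hae] with q hq hlt
    have h4 : edist q.1 q.2 < 2 := by
      rw [edist_dist]
      calc ENNReal.ofReal (dist q.1 q.2) < ENNReal.ofReal 2 :=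
            (ENNReal.ofReal_lt_ofReal_iff (by norm_num)).2 hlt
        _ = 2 := by simp
    exact (ENNReal.rpow_lt_rpow h4 hp0).ne hq
  by_contra hne
  have hlt : dist x y < 2 := lt_of_le_of_ne (qs_dist_le x y) hne
  have hopen : IsOpen {q : ↥Qs × ↥Qs | dist q.1 q.2 < 2} :=
    isOpen_lt (continuous_dist) continuous_const
  obtain ⟨U, V, hU, hV, hxU, hyV, hUV⟩ := isOpen_prod_iff.1 hopen x y hlt
  have hz : (μ.prod ν) (U ×ˢ V) = 0 := by
    apply measure_mono_null _ hae2
    intro q hq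
    simpa using hUV hq
  rw [Measure.prod_prod] at hz
  rcases mul_eq_zero.1 hz with h0 | h0
  · exact hx U hU hxU h0
  · exact hy V hV hyV h0

lemma msupport_compl {μ : Measure ↥Qs} {K : Set ↥Qs} (h : msupport μ ⊆ K) : μ Kᶜ = 0 := by
  apply measure_mono_null (Set.compl_subset_compl.2 h)
  apply measure_null_of_locally_null
  intro x hx
  simp only [msupport, Set.mem_compl_iff, Set.mem_ofPred_eq, not_forall, not_not] at hx
  obtain ⟨U, hU, hxU, h0⟩ := hx
  exact ⟨U, mem_nhdsWithin_of_mem_nhds (hU.mem_nhds hxU), h0⟩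

lemma msupport_nonempty {μ : Measure ↥Qs} (hμ : IsProbabilityMeasure μ) :
    (msupport μ).Nonempty := by
  by_contra h
  rw [Set.not_nonempty_iff_eq_empty] at h
  have := msupport_compl h.subset
  simp at this

open scoped NNReal

lemma repr_two {μ : Measure ↥Qs} (hμ : IsProbabilityMeasure μ) {x y : ↥Qs} (hxy : x ≠ y)
    (h : μ ({x, y} : Set ↥Qs)ᶜ = 0) :
    ∃ a b : ℝ≥0, a + b = 1 ∧ μ = a • Measure.dirac x + b • Measure.dirac y := by
  have key : μ = μ {x} • Measure.dirac x + μ {y} • Measure.dirac y := by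
    have h1 : μ.restrict {x, y} = μ := by
      apply Measure.restrict_eq_self_of_ae_mem
      exact h
    rw [← h1, Set.insert_eq, Measure.restrict_union (by simpa using hxy) (by simp),
      Measure.restrict_singleton, Measure.restrict_singleton]
    congr 1 <;> simp [hxy, hxy.symm]
  refine ⟨(μ {x}).toNNReal, (μ {y}).toNNReal, ?_, ?_⟩
  · have h2 : μ {x} + μ {y} = 1 := by
      have : μ Set.univ = 1 := measure_univ
      rw [key] at this
      simpa using this
    rw [← ENNReal.toNNReal_add (by simp) (by simp), h2]; simp
  · conv_lhs => rw [key]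
    congr 1
    · conv_lhs => rw [← ENNReal.coe_toNNReal (measure_ne_top μ {x})]
      rfl
    · conv_lhs => rw [← ENNReal.coe_toNNReal (measure_ne_top μ {y})]
      rfl

lemma snow_aux {p : ℝ} (hp : 1 ≤ p) {x y : ↥Qs} (hxy : x ≠ y) {a b c d : ℝ≥0}
    (h1 : a + b = 1) (h2 : c + d = 1) (hac : a ≤ c) :
    Wdist p (a • Measure.dirac x + b • Measure.dirac y) (c • Measure.dirac x + d • Measure.dirac y)
      = dist x y * (|(a : ℝ) - c|) ^ (1 / p) := by
  have hp0 : 0 < p := by linarith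
  obtain ⟨e, rfl⟩ := exists_add_of_le hac
  have hb : b = e + d := by
    have : a + b = a + (e + d) := by rw [h1, ← h2]; ring
    exact add_left_cancel this
  subst hb
  set μ : Measure ↥Qs := a • Measure.dirac x + (e + d) • Measure.dirac y with hμ
  set ν : Measure ↥Qs := (a + e) • Measure.dirac x + d • Measure.dirac y with hν
  have key : (⨅ π ∈ {π : Measure (↥Qs × ↥Qs) | π.map Prod.fst = μ ∧ π.map Prod.snd = ν},
      (∫⁻ q, edist q.1 q.2 ^ p ∂π) ^ (1 / p)) = (edist y x ^ p * e) ^ (1 / p) := by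
    apply le_antisymm
    · set π : Measure (↥Qs × ↥Qs) := a • Measure.dirac (x, x) + e • Measure.dirac (y, x)
        + d • Measure.dirac (y, y) with hπ
      have hc : π ∈ {π : Measure (↥Qs × ↥Qs) | π.map Prod.fst = μ ∧ π.map Prod.snd = ν} := by
        constructor
        · rw [hπ, Measure.map_add _ _ measurable_fst, Measure.map_add _ _ measurable_fst,
            Measure.map_smul, Measure.map_smul, Measure.map_smul, Measure.map_dirac' measurable_fst,
            Measure.map_dirac' measurable_fst, Measure.map_dirac' measurable_fst, hμ, add_smul,
            add_assoc]
        · rw [hπ, Measure.map_add _ _ measurable_snd, Measure.map_add _ _ measurable_snd,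
            Measure.map_smul, Measure.map_smul, Measure.map_smul, Measure.map_dirac' measurable_snd,
            Measure.map_dirac' measurable_snd, Measure.map_dirac' measurable_snd, hν, add_smul]
      refine (iInf₂_le π hc).trans ?_
      apply ENNReal.rpow_le_rpow _ (by positivity)
      apply le_of_eq
      rw [hπ, lintegral_add_measure, lintegral_add_measure, lintegral_smul_measure,
        lintegral_smul_measure, lintegral_smul_measure, lintegral_dirac, lintegral_dirac,
        lintegral_dirac]
      simp [hp0, ENNReal.smul_def, mul_comm]
    · refine le_iInf₂ fun π hπ => ENNReal.rpow_le_rpow ?_ (by positivity)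
      obtain ⟨hf, hs⟩ := hπ
      have hsm : ∀ (c : ℝ≥0) (t : ENNReal), c • t = c * t := fun _ _ => rfl
      have hfx : π {q | q.1 = x} = a := by
        have : (π.map Prod.fst) {x} = a := by
          rw [hf, hμ]; simp only [Measure.add_apply, Measure.smul_apply]; simp [hxy.symm, hsm]
        rwa [Measure.map_apply measurable_fst (measurableSet_singleton x)] at this
      have hsx : π {q | q.2 = x} = a + e := by
        have : (π.map Prod.snd) {x} = a + e := by
          rw [hs, hν]; simp only [Measure.add_apply, Measure.smul_apply]; simp [hxy.symm, hsm]
        rwa [Measure.map_apply measurable_snd (measurableSet_singleton x)] at this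
      have hae : ∀ᵐ q ∂π, q.1 ∈ ({x, y} : Set ↥Qs) :=
        fst_ae hf (by rw [hμ]; simp)
      have hS : MeasurableSet {q : ↥Qs × ↥Qs | q.1 = y ∧ q.2 = x} :=
        (measurable_fst (measurableSet_singleton y)).inter
          (measurable_snd (measurableSet_singleton x))
      have hm : (e : ENNReal) ≤ π {q | q.1 = y ∧ q.2 = x} := by
        have h3 : π {q | q.2 = x} ≤ π ({q | q.1 = x} ∪ {q | q.1 = y ∧ q.2 = x}) := by
          apply measure_mono_ae
          filter_upwards [hae] with q hq h
          rcases hq with hq | hq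
          · left; exact hq
          · right; exact ⟨hq, h⟩
        have h4 := h3.trans (measure_union_le _ _)
        rw [hfx, hsx] at h4
        exact (ENNReal.add_le_add_iff_left (by simp)).1 h4
      calc edist y x ^ p * e ≤ edist y x ^ p * π {q | q.1 = y ∧ q.2 = x} := by gcongr
        _ = ∫⁻ q in {q | q.1 = y ∧ q.2 = x}, edist y x ^ p ∂π := by
            rw [setLIntegral_const]
        _ = ∫⁻ q in {q | q.1 = y ∧ q.2 = x}, edist q.1 q.2 ^ p ∂π := by
            apply setLIntegral_congr_fun hS
            rintro q ⟨h1, h2⟩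
            simp only [h1, h2]
        _ ≤ _ := setLIntegral_le_lintegral _ _
  unfold Wdist
  rw [key, ENNReal.mul_rpow_of_nonneg _ _ (by positivity), ← ENNReal.rpow_mul,
    mul_one_div_cancel hp0.ne', ENNReal.rpow_one, ENNReal.toReal_mul, edist_dist,
    ENNReal.toReal_ofReal dist_nonneg, ← ENNReal.toReal_rpow, dist_comm]
  congr 2
  push_cast
  rw [show (a : ℝ) - (a + e) = -e by ring, abs_neg, abs_of_nonneg (by positivity)]
  simp

lemma snow {p : ℝ} (hp : 1 ≤ p) {x y : ↥Qs} (hxy : x ≠ y) {a b c d : ℝ≥0}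
    (h1 : a + b = 1) (h2 : c + d = 1) :
    Wdist p (a • Measure.dirac x + b • Measure.dirac y) (c • Measure.dirac x + d • Measure.dirac y)
      = dist x y * (|(a : ℝ) - c|) ^ (1 / p) := by
  rcases le_total a c with h | h
  · exact snow_aux hp hxy h1 h2 h
  · have hbd : b ≤ d := by
      have h1' : (a : ℝ) + b = 1 := by exact_mod_cast h1
      have h2' : (c : ℝ) + d = 1 := by exact_mod_cast h2
      have h' : (c : ℝ) ≤ a := by exact_mod_cast h
      have : (b : ℝ) ≤ d := by linarith
      exact_mod_cast this
    have := snow_aux hp hxy.symm ((add_comm _ _).trans h1) ((add_comm _ _).trans h2) hbd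
    rw [add_comm (a • Measure.dirac x), add_comm (c • Measure.dirac x), this, dist_comm]
    have h1' : (a : ℝ) + b = 1 := by exact_mod_cast h1
    have h2' : (c : ℝ) + d = 1 := by exact_mod_cast h2
    rw [show (b : ℝ) - d = -(a - c) by linarith, abs_neg]

/-- Among measures carried by two fixed points, at most two are at a given distance
from a given one. -/
lemma no_three {p : ℝ} (hp : 1 ≤ p) {x y : ↥Qs} (hxy : x ≠ y) {m m1 m2 m3 : Measure ↥Qs}
    (hm : IsProbabilityMeasure m) (hm1 : IsProbabilityMeasure m1)
    (hm2 : IsProbabilityMeasure m2) (hm3 : IsProbabilityMeasure m3)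
    (s : m ({x, y} : Set ↥Qs)ᶜ = 0) (s1 : m1 ({x, y} : Set ↥Qs)ᶜ = 0)
    (s2 : m2 ({x, y} : Set ↥Qs)ᶜ = 0) (s3 : m3 ({x, y} : Set ↥Qs)ᶜ = 0)
    (e1 : Wdist p m m1 = 1) (e2 : Wdist p m m2 = 1) (e3 : Wdist p m m3 = 1) :
    m1 = m2 ∨ m1 = m3 ∨ m2 = m3 := by
  obtain ⟨a, b, hab, rfl⟩ := repr_two hm hxy s
  obtain ⟨a1, b1, hab1, rfl⟩ := repr_two hm1 hxy s1
  obtain ⟨a2, b2, hab2, rfl⟩ := repr_two hm2 hxy s2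
  obtain ⟨a3, b3, hab3, rfl⟩ := repr_two hm3 hxy s3
  rw [snow hp hxy hab hab1] at e1
  rw [snow hp hxy hab hab2] at e2
  rw [snow hp hxy hab hab3] at e3
  have hd : dist x y ≠ 0 := (dist_pos.2 hxy).ne'
  have hinj : ∀ u v : ℝ≥0, dist x y * (|(a : ℝ) - u|) ^ (1 / p) = 1 →
      dist x y * (|(a : ℝ) - v|) ^ (1 / p) = 1 → |(a : ℝ) - u| = |(a : ℝ) - v| := by
    intro u v hu hv
    have h : (|(a : ℝ) - u|) ^ (1 / p) = (|(a : ℝ) - v|) ^ (1 / p) :=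
      mul_left_cancel₀ hd (hu.trans hv.symm)
    exact (Real.rpow_left_inj (abs_nonneg _) (abs_nonneg _)
      (by have : 0 < p := by linarith
          positivity)).1 h
  have e12 := hinj _ _ e1 e2
  have e13 := hinj _ _ e1 e3
  have fin : ∀ {u v u' v' : ℝ≥0}, u + v = 1 → u' + v' = 1 → (u : ℝ) = u' →
      (u • Measure.dirac x + v • Measure.dirac y : Measure ↥Qs)
        = u' • Measure.dirac x + v' • Measure.dirac y := by
    intro u v u' v' h h' he
    have he : u = u' := by exact_mod_cast he
    subst he
    have : v = v' := add_left_cancel (h.trans h'.symm)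
    rw [this]
  rcases abs_eq_abs.1 e12 with h | h
  · left; exact fin hab1 hab2 (by linarith)
  · rcases abs_eq_abs.1 e13 with h' | h'
    · right; left; exact fin hab1 hab3 (by linarith)
    · right; right; exact fin hab2 hab3 (by linarith)

lemma msupport_subset {μ : Measure ↥Qs} {K : Set ↥Qs} (hK : IsClosed K) (h : μ Kᶜ = 0) :
    msupport μ ⊆ K := by
  intro x hx
  by_contra hn
  exact hx _ hK.isOpen_compl hn h

def cLB : ↥Qs := ⟨(-1, -1), by norm_num [Prod.le_def]⟩
def cLT : ↥Qs := ⟨(-1, 1), by norm_num [Prod.le_def]⟩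
def cRB : ↥Qs := ⟨(1, -1), by norm_num [Prod.le_def]⟩
def cRT : ↥Qs := ⟨(1, 1), by norm_num [Prod.le_def]⟩

lemma eq_cLB {x : ↥Qs} (h1 : x ∈ sideL) (h2 : x ∈ sideB) : x = cLB :=
  Subtype.ext (Prod.ext h1 h2)
lemma eq_cLT {x : ↥Qs} (h1 : x ∈ sideL) (h2 : x ∈ sideT) : x = cLT :=
  Subtype.ext (Prod.ext h1 h2)
lemma eq_cRB {x : ↥Qs} (h1 : x ∈ sideR) (h2 : x ∈ sideB) : x = cRB :=
  Subtype.ext (Prod.ext h1 h2)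
lemma eq_cRT {x : ↥Qs} (h1 : x ∈ sideR) (h2 : x ∈ sideT) : x = cRT :=
  Subtype.ext (Prod.ext h1 h2)

lemma not_LR {x : ↥Qs} (h1 : x ∈ sideL) (h2 : x ∈ sideR) : False := by
  simp only [sideL, sideR, Set.mem_ofPred_eq] at h1 h2
  linarith
lemma not_BT {x : ↥Qs} (h1 : x ∈ sideB) (h2 : x ∈ sideT) : False := by
  simp only [sideB, sideT, Set.mem_ofPred_eq] at h1 h2
  linarith

lemma corners_ne : cLB ≠ cLT ∧ cLB ≠ cRB ∧ cLB ≠ cRT ∧ cLT ≠ cRB ∧ cLT ≠ cRT ∧ cRB ≠ cRT := by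
  simp only [cLB, cLT, cRB, cRT, ne_eq, Subtype.mk.injEq, Prod.mk.injEq]
  norm_num

lemma corner_sides : (cLB ∈ sideL ∧ cLB ∈ sideB) ∧ (cLT ∈ sideL ∧ cLT ∈ sideT) ∧
    (cRB ∈ sideR ∧ cRB ∈ sideB) ∧ (cRT ∈ sideR ∧ cRT ∈ sideT) := by
  simp [cLB, cLT, cRB, cRT, sideL, sideR, sideB, sideT]

set_option maxHeartbeats 4000000 in
/-- Combinatorial classification of pairs of sets with all mutual distances `2`. -/
lemma classify {A B : Set ↥Qs} (hA : A.Nonempty) (hB : B.Nonempty)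
    (h : ∀ a ∈ A, ∀ b ∈ B, dist a b = 2) :
    OppSides A B ∨ (∃ x y, x ≠ y ∧ A ⊆ {x, y}) ∨ (∃ x y, x ≠ y ∧ B ⊆ {x, y}) := by
  have H := fun a ha b hb => qs_dist_two (h a ha b hb)
  obtain ⟨n1, n2, n3, n4, n5, n6⟩ := corners_ne
  by_cases hc : ∀ a ∈ A, a = cLB ∨ a = cLT ∨ a = cRB ∨ a = cRT
  · obtain ⟨⟨s1, s2⟩, ⟨s3, s4⟩, ⟨s5, s6⟩, ⟨s7, s8⟩⟩ := corner_sides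
    by_cases d1 : cLB ∈ A ∧ cRT ∈ A
    · right; right
      refine ⟨cLT, cRB, n4, fun b hb => ?_⟩
      have := H _ d1.1 b hb
      have := H _ d1.2 b hb
      have := @not_LR
      have := @not_BT
      have := @eq_cLT b
      have := @eq_cRB b
      simp only [Set.mem_insert_iff, Set.mem_singleton_iff]
      grind
    by_cases d2 : cLT ∈ A ∧ cRB ∈ A
    · right; right
      refine ⟨cLB, cRT, n3, fun b hb => ?_⟩
      have := H _ d2.1 b hb
      have := H _ d2.2 b hb
      have := @not_LR
      have := @not_BT
      have := @eq_cLB b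
      have := @eq_cRT b
      simp only [Set.mem_insert_iff, Set.mem_singleton_iff]
      grind
    right; left
    clear H h s1 s2 s3 s4 s5 s6 s7 s8
    simp only [Set.subset_def, Set.mem_insert_iff, Set.mem_singleton_iff]
    by_cases e1 : cLB ∈ A <;> by_cases e2 : cLT ∈ A
    · refine ⟨cLB, cLT, n1, fun a ha => ?_⟩
      rcases hc a ha with rfl | rfl | rfl | rfl <;> tauto
    · refine ⟨cLB, cRB, n2, fun a ha => ?_⟩
      rcases hc a ha with rfl | rfl | rfl | rfl <;> tauto
    · refine ⟨cLT, cRT, n5, fun a ha => ?_⟩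
      rcases hc a ha with rfl | rfl | rfl | rfl <;> tauto
    · refine ⟨cRB, cRT, n6, fun a ha => ?_⟩
      rcases hc a ha with rfl | rfl | rfl | rfl <;> tauto
  by_cases hc' : ∀ b ∈ B, b = cLB ∨ b = cLT ∨ b = cRB ∨ b = cRT
  · push Not at hc
    obtain ⟨a, ha, m1, m2, m3, m4⟩ := hc
    obtain ⟨b0, hb0⟩ := hB
    have l1 := @not_LR
    have l2 := @not_BT
    have k1 := @eq_cLB a
    have k2 := @eq_cLT a
    have k3 := @eq_cRB a
    have k4 := @eq_cRT a
    obtain ⟨⟨s1, s2⟩, ⟨s3, s4⟩, ⟨s5, s6⟩, ⟨s7, s8⟩⟩ := corner_sides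
    right; right
    have hab := H a ha
    rcases H a ha b0 hb0 with ⟨g, -⟩ | ⟨g, -⟩ | ⟨g, -⟩ | ⟨g, -⟩
    · refine ⟨cRB, cRT, n6, fun b hb => ?_⟩
      have := hab b hb
      simp only [Set.mem_insert_iff, Set.mem_singleton_iff]
      rcases hc' b hb with rfl | rfl | rfl | rfl <;> grind
    · refine ⟨cLB, cLT, n1, fun b hb => ?_⟩
      have := hab b hb
      simp only [Set.mem_insert_iff, Set.mem_singleton_iff]
      rcases hc' b hb with rfl | rfl | rfl | rfl <;> grind
    · refine ⟨cLT, cRT, n5, fun b hb => ?_⟩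
      have := hab b hb
      simp only [Set.mem_insert_iff, Set.mem_singleton_iff]
      rcases hc' b hb with rfl | rfl | rfl | rfl <;> grind
    · refine ⟨cLB, cRB, n2, fun b hb => ?_⟩
      have := hab b hb
      simp only [Set.mem_insert_iff, Set.mem_singleton_iff]
      rcases hc' b hb with rfl | rfl | rfl | rfl <;> grind
  · left
    push Not at hc hc'
    obtain ⟨a, ha, m1, m2, m3, m4⟩ := hc
    obtain ⟨b, hb, m1', m2', m3', m4'⟩ := hc'
    have l1 := @not_LR
    have l2 := @not_BT
    have k1 := @eq_cLB a
    have k2 := @eq_cLT a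
    have k3 := @eq_cRB a
    have k4 := @eq_cRT a
    have k1' := @eq_cLB b
    have k2' := @eq_cLT b
    have k3' := @eq_cRB b
    have k4' := @eq_cRT b
    have hab := H a ha
    have hba := fun a ha => H a ha b hb
    unfold OppSides
    rcases H a ha b hb with g | g | g | g
    · left
      constructor
      · intro u hu; have := hba u hu; grind
      · intro u hu; have := hab u hu; grind
    · right; left
      constructor
      · intro u hu; have := hba u hu; grind
      · intro u hu; have := hab u hu; grind
    · right; right; left
      constructor
      · intro u hu; have := hba u hu; grind
      · intro u hu; have := hab u hu; grind
    · right; right; right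
      constructor
      · intro u hu; have := hba u hu; grind
      · intro u hu; have := hab u hu; grind

lemma half_prob (x y : ↥Qs) : IsProbabilityMeasure
    ((1 / 2 : ℝ≥0) • Measure.dirac x + (1 / 2 : ℝ≥0) • Measure.dirac y : Measure ↥Qs) := by
  constructor
  simp only [Measure.add_apply, Measure.smul_apply, measure_univ, ENNReal.smul_def, smul_eq_mul,
    mul_one]
  rw [← ENNReal.coe_add]
  norm_num

/-- The image of the measures carried by a set with a midpoint configuration is not carried by
two points. -/
lemma not_two {p : ℝ} (hp : 1 ≤ p) {Φ : Measure ↥Qs → Measure ↥Qs}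
    (hΦ : IsWIsometry ↥Qs p Φ) {S : Set ↥Qs} (hS : MeasurableSet S) {m u v : ↥Qs}
    (hm : m ∈ S) (hu : u ∈ S) (hv : v ∈ S)
    (hmu : dist m u = 1) (hmv : dist m v = 1) (huv : u ≠ v) {x y : ↥Qs} (hxy : x ≠ y)
    (h : ∀ σ : Measure ↥Qs, IsProbabilityMeasure σ → σ Sᶜ = 0 → msupport (Φ σ) ⊆ {x, y}) :
    False := by
  obtain ⟨hbij, hiso⟩ := hΦ
  set w : Measure ↥Qs := (1 / 2 : ℝ≥0) • Measure.dirac u + (1 / 2 : ℝ≥0) • Measure.dirac v with hw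
  have pw : IsProbabilityMeasure w := half_prob u v
  have pm : IsProbabilityMeasure (Measure.dirac m : Measure ↥Qs) := inferInstance
  have pu : IsProbabilityMeasure (Measure.dirac u : Measure ↥Qs) := inferInstance
  have pv : IsProbabilityMeasure (Measure.dirac v : Measure ↥Qs) := inferInstance
  have zS : ∀ z ∈ S, (Measure.dirac z : Measure ↥Qs) Sᶜ = 0 := by
    intro z hz
    rw [Measure.dirac_apply' _ hS.compl]
    simp [hz]
  have zw : w Sᶜ = 0 := by rw [hw]; simp [zS u hu, zS v hv]
  have W : ∀ σ : Measure ↥Qs, IsProbabilityMeasure σ → σ ({u, v} : Set ↥Qs)ᶜ = 0 →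
      Wdist p (Φ (Measure.dirac m)) (Φ σ) = 1 := by
    intro σ hσ h0
    rw [hiso _ (mem_WSet hp _ pm) _ (mem_WSet hp _ hσ)]
    refine Wdist_const hp pm hσ (A := {m}) (B := {u, v}) (by simp) h0 zero_le_one ?_
    rintro a rfl b (rfl | rfl) <;> assumption
  have P : ∀ σ : Measure ↥Qs, IsProbabilityMeasure σ → IsProbabilityMeasure (Φ σ) :=
    fun σ hσ => (hbij.mapsTo (mem_WSet hp _ hσ)).1
  have inj : ∀ σ τ : Measure ↥Qs, IsProbabilityMeasure σ → IsProbabilityMeasure τ →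
      Φ σ = Φ τ → σ = τ :=
    fun σ τ hσ hτ e => hbij.injOn (mem_WSet hp _ hσ) (mem_WSet hp _ hτ) e
  have ne1 : (Measure.dirac u : Measure ↥Qs) {u} ≠ (Measure.dirac v : Measure ↥Qs) {u} := by
    simp [huv.symm]
  have ne2 : (Measure.dirac u : Measure ↥Qs) {v} ≠ w {v} := by
    simp [hw, huv, ENNReal.smul_def, eq_comm (a := (0 : ENNReal))]
  have ne3 : (Measure.dirac v : Measure ↥Qs) {u} ≠ w {u} := by
    simp [hw, huv.symm, ENNReal.smul_def, eq_comm (a := (0 : ENNReal))]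
  rcases no_three hp hxy (P _ pm) (P _ pu) (P _ pv) (P _ pw)
    (msupport_compl (h _ pm (zS m hm))) (msupport_compl (h _ pu (zS u hu)))
    (msupport_compl (h _ pv (zS v hv))) (msupport_compl (h _ pw zw))
    (W _ pu (by simp)) (W _ pv (by simp)) (W _ pw (by simp [hw])) with e | e | e
  · exact ne1 (by rw [inj _ _ pu pv e])
  · exact ne2 (by rw [← inj _ _ pu pw e])
  · exact ne3 (by rw [← inj _ _ pv pw e])

def HasMid (S : Set ↥Qs) : Prop :=
  ∃ m ∈ S, ∃ u ∈ S, ∃ v ∈ S, dist m u = 1 ∧ dist m v = 1 ∧ u ≠ v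

lemma main_aux {p : ℝ} (hp : 1 ≤ p) {Φ : Measure ↥Qs → Measure ↥Qs}
    (hΦ : IsWIsometry ↥Qs p Φ) {S T : Set ↥Qs} (hS : IsClosed S) (hT : IsClosed T)
    (mS : HasMid S) (mT : HasMid T) (hST : ∀ a ∈ S, ∀ b ∈ T, dist a b = 2)
    {μ ν : Measure ↥Qs} (hμ : IsProbabilityMeasure μ) (hν : IsProbabilityMeasure ν)
    (sμ : msupport μ ⊆ S) (sν : msupport ν ⊆ T) :
    OppSides (msupport (Φ μ)) (msupport (Φ ν)) := by
  have P : ∀ σ : Measure ↥Qs, IsProbabilityMeasure σ → IsProbabilityMeasure (Φ σ) :=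
    fun σ hσ => (hΦ.1.mapsTo (mem_WSet hp _ hσ)).1
  set A : Set ↥Qs := {x | ∃ σ : Measure ↥Qs, IsProbabilityMeasure σ ∧ σ Sᶜ = 0 ∧
    x ∈ msupport (Φ σ)} with hA
  set B : Set ↥Qs := {x | ∃ σ : Measure ↥Qs, IsProbabilityMeasure σ ∧ σ Tᶜ = 0 ∧
    x ∈ msupport (Φ σ)} with hB
  have subA : ∀ σ : Measure ↥Qs, IsProbabilityMeasure σ → σ Sᶜ = 0 → msupport (Φ σ) ⊆ A :=
    fun σ h1 h2 x hx => ⟨σ, h1, h2, hx⟩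
  have subB : ∀ σ : Measure ↥Qs, IsProbabilityMeasure σ → σ Tᶜ = 0 → msupport (Φ σ) ⊆ B :=
    fun σ h1 h2 x hx => ⟨σ, h1, h2, hx⟩
  have hAμ := subA μ hμ (msupport_compl sμ)
  have hBν := subB ν hν (msupport_compl sν)
  have nA : A.Nonempty := (msupport_nonempty (P μ hμ)).mono hAμ
  have nB : B.Nonempty := (msupport_nonempty (P ν hν)).mono hBν
  have hd : ∀ a ∈ A, ∀ b ∈ B, dist a b = 2 := by
    rintro a ⟨σ, hσ, hσ0, ha⟩ b ⟨τ, hτ, hτ0, hb⟩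
    refine dist_of_Wdist_two hp (P σ hσ) (P τ hτ) ?_ a ha b hb
    rw [hΦ.2 _ (mem_WSet hp _ hσ) _ (mem_WSet hp _ hτ)]
    exact Wdist_const hp hσ hτ hσ0 hτ0 zero_le_two hST
  rcases classify nA nB hd with h | ⟨x, y, hxy, h⟩ | ⟨x, y, hxy, h⟩
  · rcases h with h | h | h | h
    · exact Or.inl ⟨hAμ.trans h.1, hBν.trans h.2⟩
    · exact Or.inr (Or.inl ⟨hAμ.trans h.1, hBν.trans h.2⟩)
    · exact Or.inr (Or.inr (Or.inl ⟨hAμ.trans h.1, hBν.trans h.2⟩))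
    · exact Or.inr (Or.inr (Or.inr ⟨hAμ.trans h.1, hBν.trans h.2⟩))
  · obtain ⟨m, hm, u, hu, v, hv, h1, h2, h3⟩ := mS
    exact (not_two hp hΦ hS.measurableSet hm hu hv h1 h2 h3 hxy
      fun σ hσ h0 => (subA σ hσ h0).trans h).elim
  · obtain ⟨m, hm, u, hu, v, hv, h1, h2, h3⟩ := mT
    exact (not_two hp hΦ hT.measurableSet hm hu hv h1 h2 h3 hxy
      fun σ hσ h0 => (subB σ hσ h0).trans h).elim

lemma closed_sides : IsClosed sideL ∧ IsClosed sideR ∧ IsClosed sideB ∧ IsClosed sideT := by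
  refine ⟨?_, ?_, ?_, ?_⟩
  · exact isClosed_eq (by fun_prop : Continuous fun q : ↥Qs => (q : ℝ × ℝ).1) continuous_const
  · exact isClosed_eq (by fun_prop : Continuous fun q : ↥Qs => (q : ℝ × ℝ).1) continuous_const
  · exact isClosed_eq (by fun_prop : Continuous fun q : ↥Qs => (q : ℝ × ℝ).2) continuous_const
  · exact isClosed_eq (by fun_prop : Continuous fun q : ↥Qs => (q : ℝ × ℝ).2) continuous_const

lemma mid_sides : HasMid sideL ∧ HasMid sideR ∧ HasMid sideB ∧ HasMid sideT := by
  obtain ⟨⟨s1, s2⟩, ⟨s3, s4⟩, ⟨s5, s6⟩, ⟨s7, s8⟩⟩ := corner_sides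
  obtain ⟨n1, n2, n3, n4, n5, n6⟩ := corners_ne
  refine ⟨⟨⟨(-1, 0), by norm_num [Prod.le_def]⟩, rfl, cLB, s1, cLT, s3, ?_, ?_, n1⟩,
    ⟨⟨(1, 0), by norm_num [Prod.le_def]⟩, rfl, cRB, s5, cRT, s7, ?_, ?_, n6⟩,
    ⟨⟨(0, -1), by norm_num [Prod.le_def]⟩, rfl, cLB, s2, cRB, s6, ?_, ?_, n2⟩,
    ⟨⟨(0, 1), by norm_num [Prod.le_def]⟩, rfl, cLT, s4, cRT, s8, ?_, ?_, n5⟩⟩ <;>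
  rw [qs_dist_eq] <;> norm_num [cLB, cLT, cRB, cRT]

end Helpers

/-- An isometry of `𝒲_p(Q, d_m)` maps pairs of measures supported on opposite sides of
`Q` to pairs of measures supported on opposite sides of `Q`. -/
theorem isometry_preserves_opposite_sides (p : ℝ) (hp : 1 ≤ p)
    (Φ : Measure ↥Qs → Measure ↥Qs) (hΦ : IsWIsometry ↥Qs p Φ)
    (μ ν : Measure ↥Qs) (hμ : μ ∈ WSet ↥Qs p) (hν : ν ∈ WSet ↥Qs p)
    (h : OppSides (msupport μ) (msupport ν)) :
    OppSides (msupport (Φ μ)) (msupport (Φ ν)) := by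
  obtain ⟨cL, cR, cB, cT⟩ := closed_sides
  obtain ⟨mL, mR, mB, mT⟩ := mid_sides
  rcases h with ⟨h1, h2⟩ | ⟨h1, h2⟩ | ⟨h1, h2⟩ | ⟨h1, h2⟩
  · exact main_aux hp hΦ cL cR mL mR
      (fun a ha b hb => dist_two_of_side (Or.inl ⟨ha, hb⟩)) hμ.1 hν.1 h1 h2
  · exact main_aux hp hΦ cR cL mR mL
      (fun a ha b hb => dist_two_of_side (Or.inr (Or.inl ⟨ha, hb⟩))) hμ.1 hν.1 h1 h2
  · exact main_aux hp hΦ cB cT mB mT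
      (fun a ha b hb => dist_two_of_side (Or.inr (Or.inr (Or.inl ⟨ha, hb⟩)))) hμ.1 hν.1 h1 h2
  · exact main_aux hp hΦ cT cB mT mB
      (fun a ha b hb => dist_two_of_side (Or.inr (Or.inr (Or.inr ⟨ha, hb⟩)))) hμ.1 hν.1 h1 h2
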